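/- Let n ≥ 1, δ > 0, and let V : ℝⁿ → ℝ be a smooth potential of symbolic decay order −δ: for every multi-index α there is a constant C_α such that |∂^α V(x)| ≤ C_α (1+|x|)^{−δ−|α|} for all x ∈ ℝⁿ. Let λ > 0 and let ψ : ℝⁿ → ℂ be smooth with ∫_{ℝⁿ} |ψ|² < ∞ and −Δψ + Vψ = λψ on ℝⁿ, where Δ = Σᵢ ∂²/∂xᵢ². Then ψ ≡ 0. -/

import Mathlib

open MeasureTheory

/-- Euclidean Laplacian of a complex-valued function on `ℝⁿ`. -/
noncomputable def lap {n : ℕ} (f : EuclideanSpace ℝ (Fin n) → ℂ)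
    (x : EuclideanSpace ℝ (Fin n)) : ℂ :=
  ∑ i : Fin n, fderiv ℝ (fun y => fderiv ℝ f y (EuclideanSpace.single i 1)) x
    (EuclideanSpace.single i 1)

/-- Partial derivative of a real function. -/
noncomputable def pd {n : ℕ} (i : Fin n) (f : EuclideanSpace ℝ (Fin n) → ℝ)
    (x : EuclideanSpace ℝ (Fin n)) : ℝ :=
  fderiv ℝ f x (EuclideanSpace.single i 1)

lemma pd_mul {n : ℕ} (i : Fin n) {f g : EuclideanSpace ℝ (Fin n) → ℝ} {x}
    (hf : DifferentiableAt ℝ f x) (hg : DifferentiableAt ℝ g x) :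
    pd i (fun y => f y * g y) x = pd i f x * g x + f x * pd i g x := by
  unfold pd
  rw [fderiv_fun_mul hf hg]
  simp; ring

lemma pd_add {n : ℕ} (i : Fin n) {f g : EuclideanSpace ℝ (Fin n) → ℝ} {x}
    (hf : DifferentiableAt ℝ f x) (hg : DifferentiableAt ℝ g x) :
    pd i (fun y => f y + g y) x = pd i f x + pd i g x := by
  unfold pd
  rw [fderiv_fun_add hf hg]
  simp

lemma pd_sub {n : ℕ} (i : Fin n) {f g : EuclideanSpace ℝ (Fin n) → ℝ} {x}
    (hf : DifferentiableAt ℝ f x) (hg : DifferentiableAt ℝ g x) :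
    pd i (fun y => f y - g y) x = pd i f x - pd i g x := by
  unfold pd
  rw [fderiv_fun_sub hf hg]
  simp

lemma pd_const {n : ℕ} (i : Fin n) (c : ℝ) (x) :
    pd i (fun _ => c) x = 0 := by
  unfold pd
  simp

lemma pd_sum {n : ℕ} (i : Fin n) {f : Fin n → EuclideanSpace ℝ (Fin n) → ℝ} {x}
    (hf : ∀ j, DifferentiableAt ℝ (f j) x) :
    pd i (fun y => ∑ j, f j y) x = ∑ j, pd i (f j) x := by
  unfold pd
  rw [fderiv_fun_sum (fun j _ => hf j)]
  simp

lemma pd_coord {n : ℕ} (i j : Fin n) (x : EuclideanSpace ℝ (Fin n)) :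
    pd i (fun y => y j) x = if j = i then 1 else 0 := by
  unfold pd
  have : (fun y : EuclideanSpace ℝ (Fin n) => y j) = (EuclideanSpace.proj j : _ →L[ℝ] ℝ) := by
    ext y; simp
  rw [this, ContinuousLinearMap.fderiv]
  simp

lemma pd_continuous {n : ℕ} (i : Fin n) {f : EuclideanSpace ℝ (Fin n) → ℝ}
    (hf : ContDiff ℝ 1 f) : Continuous (pd i f) := by
  unfold pd
  exact (hf.continuous_fderiv (by simp)).clm_apply continuous_const

lemma pd_contDiff {n : ℕ} (i : Fin n) {f : EuclideanSpace ℝ (Fin n) → ℝ}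
    (hf : ContDiff ℝ (⊤ : ℕ∞) f) : ContDiff ℝ (⊤ : ℕ∞) (pd i f) := by
  unfold pd
  exact (hf.fderiv_right (m := (⊤ : ℕ∞)) (by simp)).clm_apply contDiff_const

lemma pd_hcs {n : ℕ} (i : Fin n) {f : EuclideanSpace ℝ (Fin n) → ℝ}
    (hf : HasCompactSupport f) : HasCompactSupport (pd i f) := by
  unfold pd
  exact hf.fderiv_apply (𝕜 := ℝ) _

lemma pd_symm {n : ℕ} (i j : Fin n) {f : EuclideanSpace ℝ (Fin n) → ℝ}
    (hf : ContDiff ℝ (⊤ : ℕ∞) f) (x) : pd i (pd j f) x = pd j (pd i f) x := by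
  have h := (hf.contDiffAt (x := x)).isSymmSndFDerivAt (by
    simp only [minSmoothness_of_isRCLikeNormedField]
    exact (WithTop.coe_le_coe.2 le_top : ((2:ℕ∞) : WithTop ℕ∞) ≤ ((⊤:ℕ∞) : WithTop ℕ∞)))
  have hd : DifferentiableAt ℝ (fderiv ℝ f) x :=
    ((hf.fderiv_right (m := (⊤ : ℕ∞)) (by simp)).differentiable (by simp)) x
  have key : ∀ a b : Fin n, pd a (pd b f) x
      = fderiv ℝ (fderiv ℝ f) x (EuclideanSpace.single a 1) (EuclideanSpace.single b 1) := by
    intro a b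
    unfold pd
    rw [fderiv_clm_apply hd (differentiableAt_const _)]
    simp
  rw [key, key]
  exact h _ _

lemma integral_pd_eq_zero {n : ℕ} (i : Fin n) {f : EuclideanSpace ℝ (Fin n) → ℝ}
    (hf : ContDiff ℝ 1 f) (hc : HasCompactSupport f) : ∫ x, pd i f x = 0 := by
  have h := integral_mul_fderiv_eq_neg_fderiv_mul_of_integrable (μ := volume)
    (f := fun _ : EuclideanSpace ℝ (Fin n) => (1:ℝ)) (g := f)
    (v := EuclideanSpace.single i 1) (by simp)
    (by simp only [one_mul]
        exact (pd_continuous i hf).integrable_of_hasCompactSupport (pd_hcs i hc))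
    (by simpa using hf.continuous.integrable_of_hasCompactSupport hc)
    (by simp) (fun x _ => hf.differentiable (by simp) x)
  simpa [pd] using h

lemma cutoff_exists (n : ℕ) : ∃ (χ : ℕ → EuclideanSpace ℝ (Fin n) → ℝ) (C : ℝ), 0 ≤ C ∧
    (∀ k, ContDiff ℝ 1 (χ k)) ∧ (∀ k, HasCompactSupport (χ k)) ∧
    (∀ k x, 0 ≤ χ k x) ∧ (∀ k x, χ k x ≤ 1) ∧
    (∀ (k : ℕ) x, ‖x‖ ≤ k + 1 → χ k x = 1) ∧
    (∀ (k : ℕ) i x, ‖x‖ < k + 1 → pd i (χ k) x = 0) ∧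
    (∀ (k : ℕ) i x, |pd i (χ k) x| * (1 + ‖x‖) ≤ C) := by
  let f : ContDiffBump (0 : EuclideanSpace ℝ (Fin n)) := ⟨1, 2, by norm_num, by norm_num⟩
  have hfs : ContDiff ℝ 1 f := f.contDiff (n := 1)
  obtain ⟨C, hC⟩ := (f.hasCompactSupport.fderiv (𝕜 := ℝ)).exists_bound_of_continuous
    (hfs.continuous_fderiv (by simp))
  have hC0 : 0 ≤ C := (norm_nonneg _).trans (hC 0)
  have hpos : ∀ k : ℕ, (0:ℝ) < k + 1 := fun k => by positivity
  have hpd : ∀ (k : ℕ) (i : Fin n) x, pd i (fun x => f (((k:ℝ) + 1)⁻¹ • x)) x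
      = ((k:ℝ) + 1)⁻¹ * fderiv ℝ f (((k:ℝ) + 1)⁻¹ • x) (EuclideanSpace.single i 1) := by
    intro k i x
    unfold pd
    rw [fderiv_comp_smul]; simp
  refine ⟨fun k x => f (((k:ℝ) + 1)⁻¹ • x), 3 * C, by positivity, ?_, ?_, ?_, ?_, ?_, ?_, ?_⟩
  · intro k
    exact hfs.comp (contDiff_const_smul _)
  · intro k
    exact f.hasCompactSupport.comp_smul (inv_ne_zero (hpos k).ne')
  · intro k x; exact f.nonneg
  · intro k x; exact f.le_one
  · intro k x hx
    apply f.one_of_mem_closedBall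
    simp only [mem_closedBall_zero_iff, norm_smul, norm_inv, Real.norm_eq_abs, abs_of_pos (hpos k)]
    rw [inv_mul_le_iff₀ (hpos k)]
    simpa [f] using hx
  · intro k i x hx
    unfold pd
    have : (fun x => f (((k:ℝ) + 1)⁻¹ • x)) =ᶠ[nhds x] fun _ => (1:ℝ) := by
      have : Metric.ball (0 : EuclideanSpace ℝ (Fin n)) ((k:ℝ)+1) ∈ nhds x :=
        Metric.isOpen_ball.mem_nhds (by simpa using hx)
      filter_upwards [this] with y hy
      apply f.one_of_mem_closedBall
      simp only [mem_closedBall_zero_iff, norm_smul, norm_inv, Real.norm_eq_abs,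
        abs_of_pos (hpos k)]
      rw [inv_mul_le_iff₀ (hpos k)]
      have : ‖y‖ < k + 1 := by simpa using hy
      simpa [f] using this.le
    rw [this.fderiv_eq]; simp
  · intro k i x
    rw [hpd]
    by_cases hx : ‖x‖ ≤ 2 * (k + 1)
    · have h1 : |fderiv ℝ f (((k:ℝ) + 1)⁻¹ • x) (EuclideanSpace.single i 1)| ≤ C := by
        have := (fderiv ℝ f (((k:ℝ) + 1)⁻¹ • x)).le_opNorm (EuclideanSpace.single i 1)
        simp at this
        exact this.trans (hC _)
      rw [abs_mul, abs_of_pos (inv_pos.2 (hpos k)), mul_assoc, inv_mul_le_iff₀ (hpos k)]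
      have h2 : 1 + ‖x‖ ≤ 3 * (k + 1) := by
        have : (0:ℝ) ≤ k := by positivity
        linarith
      calc _ ≤ C * (3 * (k + 1)) := by gcongr
        _ = _ := by ring
    · have : fderiv ℝ f (((k:ℝ) + 1)⁻¹ • x) = 0 := by
        apply image_eq_zero_of_notMem_tsupport
        intro h
        have h2 := tsupport_fderiv_subset ℝ h
        rw [f.tsupport_eq] at h2
        simp only [mem_closedBall_zero_iff, norm_smul, norm_inv, Real.norm_eq_abs,
          abs_of_pos (hpos k)] at h2
        rw [inv_mul_le_iff₀ (hpos k)] at h2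
        apply hx
        have : f.rOut = 2 := rfl
        rw [this] at h2; linarith
      rw [this]; simp; positivity

lemma divergence_le {n : ℕ} {J : Fin n → EuclideanSpace ℝ (Fin n) → ℝ}
    {h k : EuclideanSpace ℝ (Fin n) → ℝ} (hJ : ∀ i, ContDiff ℝ 1 (J i))
    (hh : Integrable h) (hk : Integrable k)
    (hJh : ∀ i x, |J i x| ≤ (1 + ‖x‖) * h x)
    (hdiv : ∀ x, k x ≤ ∑ i, pd i (J i) x) : ∫ x, k x ≤ 0 := by
  obtain ⟨χ, C, hC0, hχs, hχc, hχ0, hχ1, hχone, hχz, hχb⟩ := cutoff_exists n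
  have hcross : ∀ m i, Integrable (fun x => pd i (χ m) x * J i x) := fun m i =>
    ((pd_continuous i (hχs m)).mul (hJ i).continuous).integrable_of_hasCompactSupport
      ((pd_hcs i (hχc m)).mul_right)
  have hmain : ∀ m i, Integrable (fun x => χ m x * pd i (J i) x) := fun m i =>
    ((hχs m).continuous.mul (pd_continuous i (hJ i))).integrable_of_hasCompactSupport
      ((hχc m).mul_right)
  have hχk : ∀ m, Integrable (fun x => χ m x * k x) := fun m =>
    hk.bdd_mul (c := 1) (hχs m).continuous.aestronglyMeasurable
      (Filter.Eventually.of_forall fun x => by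
        rw [Real.norm_eq_abs, abs_of_nonneg (hχ0 m x)]; exact hχ1 m x)
  have hle : ∀ m, ∫ x, (χ m x * k x + ∑ i, pd i (χ m) x * J i x) ≤ 0 := by
    intro m
    have hz : ∫ x, (∑ i, pd i (fun y => χ m y * J i y) x) = 0 := by
      rw [integral_finsetSum]
      · apply Finset.sum_eq_zero
        intro i _
        exact integral_pd_eq_zero i ((hχs m).mul (hJ i)) (hχc m).mul_right
      · intro i _
        exact (pd_continuous i ((hχs m).mul (hJ i))).integrable_of_hasCompactSupport
          (pd_hcs i (hχc m).mul_right)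
    rw [← hz]
    apply integral_mono
    · exact (hχk m).add (integrable_finsetSum _ fun i _ => hcross m i)
    · exact integrable_finsetSum _ fun i _ =>
        (pd_continuous i ((hχs m).mul (hJ i))).integrable_of_hasCompactSupport
          (pd_hcs i (hχc m).mul_right)
    · intro x
      have e : ∀ i, pd i (fun y => χ m y * J i y) x
          = pd i (χ m) x * J i x + χ m x * pd i (J i) x := fun i =>
        pd_mul i ((hχs m).differentiable (by simp) x) ((hJ i).differentiable (by simp) x)
      simp only [e, Finset.sum_add_distrib, ← Finset.mul_sum]
      have := mul_le_mul_of_nonneg_left (hdiv x) (hχ0 m x)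
      linarith
  have hlim : Filter.Tendsto (fun m => ∫ x, (χ m x * k x + ∑ i, pd i (χ m) x * J i x))
      Filter.atTop (nhds (∫ x, k x)) := by
    apply tendsto_integral_of_dominated_convergence (fun x => |k x| + ∑ i : Fin n, C * h x)
    · intro m
      exact ((hχk m).add (integrable_finsetSum _ fun i _ => hcross m i)).aestronglyMeasurable
    · exact hk.abs.add (integrable_finsetSum _ fun i _ => hh.const_mul C)
    · intro m
      refine Filter.Eventually.of_forall fun x => ?_
      rw [Real.norm_eq_abs]
      refine (abs_add_le _ _).trans (add_le_add ?_ ((Finset.abs_sum_le_sum_abs _ _).trans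
        (Finset.sum_le_sum fun i _ => ?_)))
      · rw [abs_mul, abs_of_nonneg (hχ0 m x)]
        exact mul_le_of_le_one_left (abs_nonneg _) (hχ1 m x)
      · rw [abs_mul]
        have hx : 0 < 1 + ‖x‖ := by positivity
        have h0 : 0 ≤ h x := by
          have := (abs_nonneg _).trans (hJh i x)
          exact nonneg_of_mul_nonneg_right this hx
        calc |pd i (χ m) x| * |J i x| ≤ |pd i (χ m) x| * ((1 + ‖x‖) * h x) := by
              gcongr; exact hJh i x
          _ = (|pd i (χ m) x| * (1 + ‖x‖)) * h x := by ring
          _ ≤ C * h x := by gcongr; exact hχb m i x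
    · refine Filter.Eventually.of_forall fun x => ?_
      apply tendsto_const_nhds.congr'
      obtain ⟨N, hN⟩ := exists_nat_gt ‖x‖
      filter_upwards [Filter.eventually_ge_atTop N] with m hm
      have hm' : (N:ℝ) ≤ m := by exact_mod_cast hm
      have hlt : ‖x‖ < m + 1 := by linarith
      simp [hχone m x hlt.le, hχz m _ x hlt]
  exact le_of_tendsto' hlim hle

lemma caccioppoli {n : ℕ} {v W : EuclideanSpace ℝ (Fin n) → ℝ} (hv : ContDiff ℝ (⊤ : ℕ∞) v)
    (hv2 : Integrable (fun x => v x ^ 2)) {CW : ℝ} (hW : ∀ x, |W x| ≤ CW)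
    (heq : ∀ x, ∑ i, pd i (pd i v) x = W x * v x) :
    Integrable (fun x => ∑ i, pd i v x ^ 2) := by
  obtain ⟨χ, C, hC0, hχs, hχc, hχ0, hχ1, hχone, hχz, hχb⟩ := cutoff_exists n
  have hvi : ∀ i, ContDiff ℝ 1 (pd i v) := fun i => (pd_contDiff i hv).of_le (by exact_mod_cast le_top)
  have hv1 : ContDiff ℝ 1 v := hv.of_le (by exact_mod_cast le_top)
  have hSc : Continuous (fun x => ∑ i, pd i v x ^ 2) :=
    continuous_finsetSum _ fun i _ => (hvi i).continuous.pow 2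
  have hCW : 0 ≤ CW := (abs_nonneg _).trans (hW 0)
  set D : ℝ := CW + 2 * n * C ^ 2 with hD
  have hb : ∀ m i x, |pd i (χ m) x| ≤ C := fun m i x => by
    refine le_trans ?_ (hχb m i x)
    exact le_mul_of_one_le_right (abs_nonneg _) (by linarith [norm_nonneg x])
  have hSi : ∀ m, Integrable (fun x => χ m x ^ 2 * ∑ i, pd i v x ^ 2) := by
    intro m
    have h1 : Integrable (fun x => χ m x * (χ m x * ∑ i, pd i v x ^ 2)) :=
      ((hχs m).continuous.mul ((hχs m).continuous.mul hSc)).integrable_of_hasCompactSupport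
        (hχc m).mul_right
    exact h1.congr (Filter.Eventually.of_forall fun x => by simp only; ring)
  have key : ∀ m, ∫ x, χ m x ^ 2 * ∑ i, pd i v x ^ 2 ≤ 2 * D * ∫ x, v x ^ 2 := by
    intro m
    have hG : ∀ i, ContDiff ℝ 1 (fun y => χ m y * (χ m y * (v y * pd i v y))) := fun i =>
      (hχs m).mul ((hχs m).mul (hv1.mul (hvi i)))
    have hGc : ∀ i, HasCompactSupport (fun y => χ m y * (χ m y * (v y * pd i v y))) := fun i =>
      (hχc m).mul_right
    have hGi : ∀ i, Integrable (pd i (fun y => χ m y * (χ m y * (v y * pd i v y)))) := fun i =>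
      (pd_continuous i (hG i)).integrable_of_hasCompactSupport (pd_hcs i (hGc i))
    have hz : ∫ x, (∑ i, pd i (fun y => χ m y * (χ m y * (v y * pd i v y))) x) = 0 := by
      rw [integral_finsetSum _ fun i _ => hGi i]
      exact Finset.sum_eq_zero fun i _ => integral_pd_eq_zero i (hG i) (hGc i)
    have hSi := hSi m
    have hpt : ∀ x, (1/2) * (χ m x ^ 2 * ∑ i, pd i v x ^ 2) - D * v x ^ 2 ≤
        ∑ i, pd i (fun y => χ m y * (χ m y * (v y * pd i v y))) x := by
      intro x
      have dχ := (hχs m).differentiable (by simp) x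
      have dv := hv1.differentiable (by simp) x
      have dvi := fun i => (hvi i).differentiable (by simp) x
      have e : ∀ i, pd i (fun y => χ m y * (χ m y * (v y * pd i v y))) x
          = 2 * χ m x * pd i (χ m) x * v x * pd i v x + χ m x ^ 2 * pd i v x ^ 2
            + χ m x ^ 2 * v x * pd i (pd i v) x := by
        intro i
        rw [pd_mul i dχ (dχ.fun_mul (dv.fun_mul (dvi i))), pd_mul i dχ (dv.fun_mul (dvi i)),
          pd_mul i dv (dvi i)]
        ring
      have e2 : ∀ i, (1/2) * (χ m x ^ 2 * pd i v x ^ 2) - 2 * C ^ 2 * v x ^ 2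
          + χ m x ^ 2 * v x * pd i (pd i v) x
          ≤ pd i (fun y => χ m y * (χ m y * (v y * pd i v y))) x := by
        intro i
        rw [e]
        have h1 : pd i (χ m) x ^ 2 ≤ C ^ 2 := sq_le_sq' (abs_le.1 (hb m i x)).1 (abs_le.1 (hb m i x)).2
        have h2 := mul_le_mul_of_nonneg_right h1 (sq_nonneg (v x))
        nlinarith [sq_nonneg (χ m x * pd i v x + 2 * pd i (χ m) x * v x)]
      refine le_trans ?_ (Finset.sum_le_sum fun i _ => e2 i)
      rw [Finset.sum_add_distrib, Finset.sum_sub_distrib, ← Finset.mul_sum, ← Finset.mul_sum]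
      rw [← Finset.mul_sum, ← Finset.mul_sum, heq]
      simp only [Finset.sum_const, Finset.card_univ, Fintype.card_fin, nsmul_eq_mul]
      have h3 : -(CW * v x ^ 2) ≤ χ m x ^ 2 * v x * (W x * v x) := by
        have h4 := abs_le.1 (hW x)
        have h5 : χ m x ^ 2 ≤ 1 := pow_le_one₀ (hχ0 m x) (hχ1 m x)
        have h6 : -CW ≤ χ m x ^ 2 * W x := by
          nlinarith [sq_nonneg (χ m x)]
        nlinarith [mul_le_mul_of_nonneg_right h6 (sq_nonneg (v x))]
      rw [hD]
      nlinarith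
    have := integral_mono ((hSi.const_mul (1/2)).sub (hv2.const_mul D))
      (integrable_finsetSum _ fun i _ => hGi i) hpt
    rw [hz] at this
    simp only [Pi.sub_apply] at this
    rw [integral_sub (hSi.const_mul (1/2)) (hv2.const_mul D), integral_const_mul,
      integral_const_mul] at this
    linarith
  have hcov : AECover (volume : Measure (EuclideanSpace ℝ (Fin n))) Filter.atTop
      (fun m : ℕ => Metric.closedBall (0 : EuclideanSpace ℝ (Fin n)) (m:ℝ)) :=
    aecover_closedBall tendsto_natCast_atTop_atTop
  refine hcov.integrable_of_integral_bounded_of_nonneg_ae (2 * D * ∫ x, v x ^ 2) ?_ ?_ ?_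
  · intro m
    exact hSc.continuousOn.integrableOn_compact (isCompact_closedBall _ _)
  · exact Filter.Eventually.of_forall fun x => Finset.sum_nonneg fun i _ => sq_nonneg _
  · refine Filter.Eventually.of_forall fun m => le_trans ?_ (key m)
    rw [← integral_indicator measurableSet_closedBall]
    apply integral_mono_of_nonneg
    · exact Filter.Eventually.of_forall fun x => Set.indicator_nonneg
        (fun x _ => Finset.sum_nonneg fun i _ => sq_nonneg _) x
    · exact hSi m
    · refine Filter.Eventually.of_forall fun x => ?_
      by_cases hx : x ∈ Metric.closedBall (0 : EuclideanSpace ℝ (Fin n)) (m:ℝ)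
      · have hx' : ‖x‖ ≤ m := by simpa using hx
        simp [Set.indicator_of_mem hx, hχone m x (by linarith)]
      · simp only [Set.indicator_of_notMem hx]
        exact mul_nonneg (sq_nonneg _) (Finset.sum_nonneg fun i _ => sq_nonneg _)

noncomputable def Xf {n : ℕ} (v : EuclideanSpace ℝ (Fin n) → ℝ)
    (x : EuclideanSpace ℝ (Fin n)) : ℝ := ∑ j, x j * pd j v x
noncomputable def Sf {n : ℕ} (v : EuclideanSpace ℝ (Fin n) → ℝ)
    (x : EuclideanSpace ℝ (Fin n)) : ℝ := ∑ j, pd j v x * pd j v x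
noncomputable def Tf {n : ℕ} (x : EuclideanSpace ℝ (Fin n)) : ℝ := ∑ j, x j * x j
noncomputable def bf {n : ℕ} (a g : EuclideanSpace ℝ (Fin n) → ℝ)
    (x : EuclideanSpace ℝ (Fin n)) : ℝ := a x * (((n:ℝ) / 2 - 1) + Tf x * g x)
noncomputable def cf {n : ℕ} (W a g g1 : EuclideanSpace ℝ (Fin n) → ℝ)
    (x : EuclideanSpace ℝ (Fin n)) : ℝ :=
  a x * ((-1/2) * W x + ((n:ℝ) / 2) * g x + Tf x * (g x * g x) + (-1/2) * (Tf x * g1 x))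
noncomputable def Jf {n : ℕ} (v W a g g1 : EuclideanSpace ℝ (Fin n) → ℝ) (i : Fin n)
    (x : EuclideanSpace ℝ (Fin n)) : ℝ :=
  a x * (Xf v x * pd i v x - (1/2) * (Sf v x * x i)) + bf a g x * (v x * pd i v x)
    + cf W a g g1 x * ((v x * v x) * x i)

lemma coord_contDiff {n : ℕ} (j : Fin n) (m : WithTop ℕ∞) :
    ContDiff ℝ m (fun y : EuclideanSpace ℝ (Fin n) => y j) :=
  (EuclideanSpace.proj j : EuclideanSpace ℝ (Fin n) →L[ℝ] ℝ).contDiff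

lemma Xf_contDiff {n : ℕ} {v : EuclideanSpace ℝ (Fin n) → ℝ} (hv : ContDiff ℝ (⊤ : ℕ∞) v) :
    ContDiff ℝ (⊤ : ℕ∞) (Xf v) := by
  unfold Xf
  exact ContDiff.sum fun j _ => (coord_contDiff j _).mul (pd_contDiff j hv)

lemma Sf_contDiff {n : ℕ} {v : EuclideanSpace ℝ (Fin n) → ℝ} (hv : ContDiff ℝ (⊤ : ℕ∞) v) :
    ContDiff ℝ (⊤ : ℕ∞) (Sf v) := by
  unfold Sf
  exact ContDiff.sum fun j _ => (pd_contDiff j hv).mul (pd_contDiff j hv)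

lemma Tf_contDiff {n : ℕ} (m : WithTop ℕ∞) : ContDiff ℝ m (Tf (n := n)) := by
  unfold Tf
  exact ContDiff.sum fun j _ => (coord_contDiff j _).mul (coord_contDiff j _)

lemma pd_Tf {n : ℕ} (i : Fin n) (x) : pd i Tf x = 2 * x i := by
  have d : ∀ j : Fin n, DifferentiableAt ℝ (fun y : EuclideanSpace ℝ (Fin n) => y j) x :=
    fun j => (coord_contDiff j 1).differentiable (by simp) x
  unfold Tf
  rw [pd_sum i (fun j => (d j).fun_mul (d j))]
  simp only [pd_mul i (d _) (d _), pd_coord]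
  simp [Finset.sum_add_distrib]
  ring

lemma pd_Xf {n : ℕ} (i : Fin n) {v : EuclideanSpace ℝ (Fin n) → ℝ} (hv : ContDiff ℝ (⊤ : ℕ∞) v)
    (x) : pd i (Xf v) x = pd i v x + ∑ j, x j * pd i (pd j v) x := by
  have d : ∀ j : Fin n, DifferentiableAt ℝ (fun y : EuclideanSpace ℝ (Fin n) => y j) x :=
    fun j => (coord_contDiff j 1).differentiable (by simp) x
  have dv : ∀ j, DifferentiableAt ℝ (pd j v) x :=
    fun j => (pd_contDiff j hv).differentiable (by simp) x
  unfold Xf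
  rw [pd_sum i (fun j => (d j).fun_mul (dv j))]
  simp only [pd_mul i (d _) (dv _), pd_coord]
  simp [Finset.sum_add_distrib]

lemma pd_Sf {n : ℕ} (i : Fin n) {v : EuclideanSpace ℝ (Fin n) → ℝ} (hv : ContDiff ℝ (⊤ : ℕ∞) v)
    (x) : pd i (Sf v) x = 2 * ∑ j, pd j v x * pd i (pd j v) x := by
  have dv : ∀ j, DifferentiableAt ℝ (pd j v) x :=
    fun j => (pd_contDiff j hv).differentiable (by simp) x
  unfold Sf
  rw [pd_sum i (fun j => (dv j).fun_mul (dv j))]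
  simp only [pd_mul i (dv _) (dv _), Finset.mul_sum]
  exact Finset.sum_congr rfl fun j _ => by ring

lemma bf_contDiff {n : ℕ} {a g : EuclideanSpace ℝ (Fin n) → ℝ}
    (ha : ContDiff ℝ 1 a) (hg : ContDiff ℝ 1 g) : ContDiff ℝ 1 (bf a g) := by
  unfold bf
  exact ha.mul (contDiff_const.add ((Tf_contDiff 1).mul hg))

lemma cf_contDiff {n : ℕ} {W a g g1 : EuclideanSpace ℝ (Fin n) → ℝ} (hW : ContDiff ℝ 1 W)
    (ha : ContDiff ℝ 1 a) (hg : ContDiff ℝ 1 g) (hg1 : ContDiff ℝ 1 g1) :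
    ContDiff ℝ 1 (cf W a g g1) := by
  unfold cf
  exact ha.mul ((((contDiff_const.mul hW).add (contDiff_const.mul hg)).add
    ((Tf_contDiff 1).mul (hg.mul hg))).add (contDiff_const.mul ((Tf_contDiff 1).mul hg1)))

lemma Jf_contDiff {n : ℕ} {v W a g g1 : EuclideanSpace ℝ (Fin n) → ℝ}
    (hv : ContDiff ℝ (⊤ : ℕ∞) v) (hW : ContDiff ℝ 1 W)
    (ha : ContDiff ℝ 1 a) (hg : ContDiff ℝ 1 g) (hg1 : ContDiff ℝ 1 g1) (i : Fin n) :
    ContDiff ℝ 1 (Jf v W a g g1 i) := by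
  have l1 : (1 : WithTop ℕ∞) ≤ ((⊤ : ℕ∞) : WithTop ℕ∞) := by exact_mod_cast le_top
  have hv1 := hv.of_le l1
  have hvi := (pd_contDiff i hv).of_le l1
  have hX := (Xf_contDiff hv).of_le l1
  have hS := (Sf_contDiff hv).of_le l1
  unfold Jf
  exact ((ha.mul ((hX.mul hvi).sub (contDiff_const.mul (hS.mul (coord_contDiff i 1))))).add
    ((bf_contDiff ha hg).mul (hv1.mul hvi))).add
    ((cf_contDiff hW ha hg hg1).mul ((hv1.mul hv1).mul (coord_contDiff i 1)))

lemma pd_bf {n : ℕ} {a g g1 : EuclideanSpace ℝ (Fin n) → ℝ}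
    (ha : ContDiff ℝ 1 a) (hg : ContDiff ℝ 1 g) (i : Fin n) (x)
    (pa : pd i a x = 2 * g x * a x * x i) (pg : pd i g x = g1 x * x i) :
    pd i (bf a g) x = a x * (n * g x + Tf x * g1 x + 2 * Tf x * g x ^ 2) * x i := by
  have da := ha.differentiable (by simp) x
  have dg := hg.differentiable (by simp) x
  have dT := (Tf_contDiff (n := n) 1).differentiable (by simp) x
  unfold bf
  rw [pd_mul i da ((differentiableAt_const _).fun_add (dT.fun_mul dg)),
    pd_add i (differentiableAt_const _) (dT.fun_mul dg), pd_mul i dT dg, pd_const, pd_Tf, pa, pg]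
  ring

lemma pd_cf {n : ℕ} {W a g g1 g2 : EuclideanSpace ℝ (Fin n) → ℝ} (hW : ContDiff ℝ 1 W)
    (ha : ContDiff ℝ 1 a) (hg : ContDiff ℝ 1 g) (hg1 : ContDiff ℝ 1 g1) (i : Fin n) (x)
    (pa : pd i a x = 2 * g x * a x * x i) (pg : pd i g x = g1 x * x i)
    (pg1 : pd i g1 x = g2 x * x i) :
    pd i (cf W a g g1) x = (2 * g x * cf W a g g1 x + a x * (n / 2 * g1 x + 2 * g x ^ 2
      + 2 * Tf x * g x * g1 x - g1 x - 1 / 2 * Tf x * g2 x)) * x i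
      - 1 / 2 * a x * pd i W x := by
  have da := ha.differentiable (by simp) x
  have dg := hg.differentiable (by simp) x
  have dg1 := hg1.differentiable (by simp) x
  have dW := hW.differentiable (by simp) x
  have dT := (Tf_contDiff (n := n) 1).differentiable (by simp) x
  have dc : ∀ c : ℝ, DifferentiableAt ℝ (fun _ : EuclideanSpace ℝ (Fin n) => c) x :=
    fun c => differentiableAt_const _
  unfold cf
  rw [pd_mul i da (((((dc _).fun_mul dW).fun_add ((dc _).fun_mul dg)).fun_add
      (dT.fun_mul (dg.fun_mul dg))).fun_add ((dc _).fun_mul (dT.fun_mul dg1))),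
    pd_add i ((((dc _).fun_mul dW).fun_add ((dc _).fun_mul dg)).fun_add
      (dT.fun_mul (dg.fun_mul dg))) ((dc _).fun_mul (dT.fun_mul dg1)),
    pd_add i (((dc _).fun_mul dW).fun_add ((dc _).fun_mul dg)) (dT.fun_mul (dg.fun_mul dg)),
    pd_add i ((dc _).fun_mul dW) ((dc _).fun_mul dg), pd_mul i (dc _) dW, pd_mul i (dc _) dg,
    pd_mul i dT (dg.fun_mul dg), pd_mul i dg dg, pd_mul i (dc _) (dT.fun_mul dg1), pd_mul i dT dg1,
    pd_const, pd_const, pd_Tf, pa, pg, pg1]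
  ring

lemma virial {n : ℕ} {v W a g g1 g2 : EuclideanSpace ℝ (Fin n) → ℝ}
    (hv : ContDiff ℝ (⊤ : ℕ∞) v) (hW : ContDiff ℝ 1 W)
    (ha : ContDiff ℝ 1 a) (hg : ContDiff ℝ 1 g) (hg1 : ContDiff ℝ 1 g1) (x)
    (pa : ∀ i, pd i a x = 2 * g x * a x * x i) (pg : ∀ i, pd i g x = g1 x * x i)
    (pg1 : ∀ i, pd i g1 x = g2 x * x i)
    (heq : ∑ i, pd i (pd i v) x = W x * v x) :
    ∑ i, pd i (Jf v W a g g1 i) x =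
      2 * g x * a x * (Xf v x + (Tf x * g x + n / 2) * v x) ^ 2
      + a x * (v x ^ 2 * (- W x - 1 / 2 * (∑ i, x i * pd i W x) + 2 * Tf x * g x ^ 2
        + Tf x ^ 2 * g x * g1 x - Tf x * g1 x - 1 / 2 * Tf x ^ 2 * g2 x)) := by
  have da := ha.differentiable (by simp) x
  have dv := hv.differentiable (by simp) x
  have dvi := fun i => (pd_contDiff i hv).differentiable (by simp) x
  have dX := (Xf_contDiff hv).differentiable (by simp) x
  have dS := (Sf_contDiff hv).differentiable (by simp) x
  have db := (bf_contDiff ha hg).differentiable (by simp) x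
  have dcf := (cf_contDiff hW ha hg hg1).differentiable (by simp) x
  have dx : ∀ j : Fin n, DifferentiableAt ℝ (fun y : EuclideanSpace ℝ (Fin n) => y j) x :=
    fun j => (coord_contDiff j 1).differentiable (by simp) x
  have dc : ∀ c : ℝ, DifferentiableAt ℝ (fun _ : EuclideanSpace ℝ (Fin n) => c) x :=
    fun c => differentiableAt_const _
  set b1 := a x * (n * g x + Tf x * g1 x + 2 * Tf x * g x ^ 2) with hb1
  set c1 := (2 * g x * cf W a g g1 x + a x * (n / 2 * g1 x + 2 * g x ^ 2
      + 2 * Tf x * g x * g1 x - g1 x - 1 / 2 * Tf x * g2 x)) with hc1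
  have e : ∀ i, pd i (Jf v W a g g1 i) x =
      (2 * g x * a x * Xf v x + b1 * v x + 2 * cf W a g g1 x * v x) * (x i * pd i v x)
      + (c1 * v x ^ 2 - g x * a x * Sf v x) * (x i * x i)
      + (a x + bf a g x) * (pd i v x * pd i v x)
      + (a x * Xf v x + bf a g x * v x) * pd i (pd i v) x
      - 1 / 2 * a x * v x ^ 2 * (x i * pd i W x)
      + a x * (∑ j, pd i v x * x j * pd i (pd j v) x)
      - a x * (∑ j, x i * pd j v x * pd i (pd j v) x)
      + (cf W a g g1 x * v x ^ 2 - 1 / 2 * a x * Sf v x) := by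
    intro i
    unfold Jf
    rw [pd_add i ((da.fun_mul ((dX.fun_mul (dvi i)).fun_sub ((dc _).fun_mul (dS.fun_mul (dx i))))).fun_add
        (db.fun_mul (dv.fun_mul (dvi i)))) (dcf.fun_mul ((dv.fun_mul dv).fun_mul (dx i))),
      pd_add i (da.fun_mul ((dX.fun_mul (dvi i)).fun_sub ((dc _).fun_mul (dS.fun_mul (dx i)))))
        (db.fun_mul (dv.fun_mul (dvi i))),
      pd_mul i da ((dX.fun_mul (dvi i)).fun_sub ((dc _).fun_mul (dS.fun_mul (dx i)))),
      pd_sub i (dX.fun_mul (dvi i)) ((dc _).fun_mul (dS.fun_mul (dx i))),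
      pd_mul i dX (dvi i), pd_mul i (dc _) (dS.fun_mul (dx i)), pd_mul i dS (dx i),
      pd_mul i db (dv.fun_mul (dvi i)), pd_mul i dv (dvi i),
      pd_mul i dcf ((dv.fun_mul dv).fun_mul (dx i)), pd_mul i (dv.fun_mul dv) (dx i),
      pd_mul i dv dv, pd_const, pd_coord, pd_Xf i hv, pd_Sf i hv, pa,
      pd_bf ha hg i x (pa i) (pg i), pd_cf hW ha hg hg1 i x (pa i) (pg i) (pg1 i)]
    simp only [mul_assoc, ← Finset.mul_sum]
    simp only [if_true]
    ring
  have hsym : ∑ i, ∑ j, pd i v x * x j * pd i (pd j v) x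
      = ∑ i, ∑ j, x i * pd j v x * pd i (pd j v) x := by
    rw [Finset.sum_comm]
    refine Finset.sum_congr rfl fun i _ => Finset.sum_congr rfl fun j _ => ?_
    rw [pd_symm i j hv]; ring
  have hXs : ∑ i, x i * pd i v x = Xf v x := rfl
  have hTs : ∑ i, x i * x i = Tf x := rfl
  have hSs : ∑ i, pd i v x * pd i v x = Sf v x := rfl
  simp only [e, Finset.sum_add_distrib, Finset.sum_sub_distrib, ← Finset.mul_sum, hXs, hTs, hSs,
    heq, hsym, Finset.sum_const, Finset.card_univ, Fintype.card_fin, nsmul_eq_mul]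
  rw [hb1, hc1]
  unfold bf cf
  ring

lemma Tf_nonneg {n : ℕ} (x : EuclideanSpace ℝ (Fin n)) : 0 ≤ Tf x :=
  Finset.sum_nonneg fun i _ => mul_self_nonneg _

lemma K_bound {q M η g T γ lam : ℝ} (hq : 1 ≤ q) (hM : 0 < M) (hη : 0 < η) (hη1 : η ≤ 1)
    (hg : 0 ≤ g) (hT : T = M * (q - 1)) (hTg : T * g ^ 2 ≤ γ ^ 2 * M)
    (hl : η * (γ ^ 2 * M) ≤ lam / 16) :
    (q - 1) / q * (2 * M * g ^ 2 - 8 * g) - lam / 8 ≤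
      2 * T * g ^ 2 + T ^ 2 * g * (-(2 * (1 + η) / M) * (g / q))
        - T * (-(2 * (1 + η) / M) * (g / q))
        - 1 / 2 * T ^ 2 * (4 * (1 + η) * (2 + η) / M ^ 2 * (g / q ^ 2)) := by
  have hq0 : 0 < q := by linarith
  set s := (q - 1) / q with hs
  have hs0 : 0 ≤ s := div_nonneg (by linarith) hq0.le
  have hs1 : s ≤ 1 := by rw [hs, div_le_one hq0]; linarith
  have hT0 : 0 ≤ T := by rw [hT]; exact mul_nonneg hM.le (by linarith)
  have e1 : T * (1 - s) = M * s := by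
    rw [hs, hT]; field_simp; ring
  have e : 2 * T * g ^ 2 + T ^ 2 * g * (-(2 * (1 + η) / M) * (g / q))
        - T * (-(2 * (1 + η) / M) * (g / q))
        - 1 / 2 * T ^ 2 * (4 * (1 + η) * (2 + η) / M ^ 2 * (g / q ^ 2))
      = 2 * (T * (1 - s)) * g ^ 2 - 2 * η * (s * (T * g ^ 2))
        + s * g * (2 * (1 + η) * (1 - (2 + η) * s)) := by
    rw [hs, hT]; field_simp; ring
  rw [e, e1]
  have h1 : s * (T * g ^ 2) ≤ γ ^ 2 * M := by
    have : 0 ≤ T * g ^ 2 := by positivity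
    nlinarith
  have h2 : 2 * η * (s * (T * g ^ 2)) ≤ lam / 8 := by
    have := mul_le_mul_of_nonneg_left h1 hη.le
    linarith
  have h3 : -8 ≤ 2 * (1 + η) * (1 - (2 + η) * s) := by
    have : (2 + η) * s ≤ 3 := by nlinarith
    nlinarith
  have h4 := mul_le_mul_of_nonneg_left h3 (mul_nonneg hs0 hg)
  linarith

lemma rpow_diff {p q η : ℝ} (hp : 1 ≤ p) (hpq : p ≤ q) (hq : q ≤ 2) (hη : 0 < η) (hη1 : η ≤ 1) :
    η * (q - p) / 4 ≤ p ^ (-η) - q ^ (-η) := by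
  have hp0 : 0 < p := by linarith
  have hq0 : 0 < q := by linarith
  have h1 : p ^ (-η) = q ^ (-η) * (q / p) ^ η := by
    rw [Real.div_rpow hq0.le hp0.le, Real.rpow_neg hp0.le, Real.rpow_neg hq0.le]
    have := (Real.rpow_pos_of_pos hq0 η).ne'
    field_simp
  have h2 : 1 + η * ((q - p) / q) ≤ (q / p) ^ η := by
    rw [Real.rpow_def_of_pos (by positivity)]
    have h3 := Real.one_sub_inv_le_log_of_pos (show 0 < q / p by positivity)
    have h4 : 1 - (q / p)⁻¹ = (q - p) / q := by field_simp
    rw [h4] at h3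
    have := Real.add_one_le_exp (Real.log (q / p) * η)
    nlinarith
  have h5 : 1 / 2 ≤ q ^ (-η) := by
    calc (1:ℝ) / 2 ≤ q⁻¹ := by rw [one_div]; exact inv_anti₀ hq0 hq
      _ = q ^ (-1 : ℝ) := by rw [Real.rpow_neg_one]
      _ ≤ _ := Real.rpow_le_rpow_of_exponent_le (by linarith) (by linarith)
  have h6 : (q - p) / 2 ≤ (q - p) / q := by
    apply div_le_div_of_nonneg_left (by linarith) hq0 hq
  rw [h1]
  have h7 : η * ((q - p) / 2) ≤ (q / p) ^ η - 1 := by nlinarith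
  have h8 : 0 ≤ η * ((q - p) / 2) := mul_nonneg hη.le (by linarith)
  nlinarith

lemma pd_q_rpow {n : ℕ} {M : ℝ} (hM : 0 < M) (c p : ℝ) (i : Fin n) (x) :
    pd i (fun y => c * (1 + Tf y / M) ^ p) x
      = c * (p * (1 + Tf x / M) ^ (p - 1)) * (2 / M) * x i := by
  have hq : 0 < 1 + Tf x / M := by have := Tf_nonneg x; positivity
  have hT : HasFDerivAt (Tf (n := n)) (fderiv ℝ Tf x) x :=
    ((Tf_contDiff (n := n) 1).differentiable (by simp) x).hasFDerivAt
  have h1 : HasFDerivAt (fun y : EuclideanSpace ℝ (Fin n) => 1 + Tf y / M)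
      (M⁻¹ • fderiv ℝ Tf x) x := by
    simpa [div_eq_mul_inv] using (hT.mul_const M⁻¹).const_add 1
  have h2 := (h1.rpow_const (p := p) (Or.inl hq.ne')).const_mul c
  have hTp := pd_Tf i x
  unfold pd at hTp ⊢
  rw [h2.fderiv]
  simp only [smul_apply, smul_eq_mul, hTp]
  ring

lemma weights (n : ℕ) {M γ lam ε : ℝ} (hM : 4 ≤ M) (hγ : 32 ≤ γ) (hlam : 0 < lam)
    (hε : 0 < ε) (hε1 : ε ≤ 1) :
    ∃ (a g g1 g2 : EuclideanSpace ℝ (Fin n) → ℝ) (D A : ℝ),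
      ContDiff ℝ 1 a ∧ ContDiff ℝ 1 g ∧ ContDiff ℝ 1 g1 ∧
      (∀ i x, pd i a x = 2 * g x * a x * x i) ∧ (∀ i x, pd i g x = g1 x * x i) ∧
      (∀ i x, pd i g1 x = g2 x * x i) ∧
      (∀ x, 0 < a x) ∧ (∀ x, a x ≤ 1) ∧ (∀ x, 0 ≤ g x) ∧
      (∀ x, g x ≤ D) ∧ (∀ x, Tf x * g x ≤ D) ∧ (∀ x, |Tf x * g1 x| ≤ D) ∧
      (∀ x, -(8 / M) - lam / 8 ≤ 2 * Tf x * g x ^ 2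
        + Tf x ^ 2 * g x * g1 x - Tf x * g1 x - 1 / 2 * Tf x ^ 2 * g2 x) ∧
      (∀ x, ε ^ 2 ≤ Tf x → Tf x ≤ M → ε ^ 2 * γ ^ 2 / 32 - lam / 8 ≤ 2 * Tf x * g x ^ 2
        + Tf x ^ 2 * g x * g1 x - Tf x * g1 x - 1 / 2 * Tf x ^ 2 * g2 x) ∧
      0 < A ∧ (∀ x, Tf x ≤ ε ^ 2 → a x ≤ A) ∧
      (∀ x, 4 * ε ^ 2 ≤ Tf x → A * Real.exp (3 * ε ^ 2 * γ / 4) ≤ a x) := by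
  have hM0 : 0 < M := by linarith
  have hγ0 : 0 < γ := by linarith
  obtain ⟨η, hη, hη1, hηl⟩ : ∃ η : ℝ, 0 < η ∧ η ≤ 1 ∧ η * (γ ^ 2 * M) ≤ lam / 16 := by
    refine ⟨min 1 (lam / 16 / (γ ^ 2 * M)), by positivity, min_le_left _ _, ?_⟩
    rw [← le_div_iff₀ (by positivity)]
    exact min_le_right _ _
  have hq1 : ∀ x : EuclideanSpace ℝ (Fin n), 1 ≤ 1 + Tf x / M := fun x => by
    have := div_nonneg (Tf_nonneg x) hM0.le
    linarith
  have hq0 : ∀ x : EuclideanSpace ℝ (Fin n), 0 < 1 + Tf x / M := fun x => by linarith [hq1 x]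
  have hcd : ∀ c p : ℝ, ContDiff ℝ 1
      (fun x : EuclideanSpace ℝ (Fin n) => c * (1 + Tf x / M) ^ p) := fun c p =>
    contDiff_const.mul (ContDiff.rpow_const_of_ne
      (contDiff_const.add ((Tf_contDiff 1).div_const M)) fun x => (hq0 x).ne')
  have hp1 : ∀ x : EuclideanSpace ℝ (Fin n), (1 + Tf x / M) ^ (-2 - η)
      = (1 + Tf x / M) ^ (-1 - η) / (1 + Tf x / M) := fun x => by
    rw [← Real.rpow_sub_one (hq0 x).ne']; ring_nf
  have hp2 : ∀ x : EuclideanSpace ℝ (Fin n), (1 + Tf x / M) ^ (-3 - η)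
      = (1 + Tf x / M) ^ (-1 - η) / (1 + Tf x / M) ^ 2 := fun x => by
    have h := Real.rpow_sub_natCast (hq0 x).ne' (-1 - η) 2
    rw [← h]; push_cast; ring_nf
  have hTq : ∀ x : EuclideanSpace ℝ (Fin n), Tf x = M * ((1 + Tf x / M) - 1) := fun x => by
    field_simp; ring
  set a : EuclideanSpace ℝ (Fin n) → ℝ :=
    fun x => Real.exp (-(γ * M / η) * (1 + Tf x / M) ^ (-η)) with ha
  set g : EuclideanSpace ℝ (Fin n) → ℝ := fun x => γ * (1 + Tf x / M) ^ (-1 - η) with hg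
  set g1 : EuclideanSpace ℝ (Fin n) → ℝ :=
    fun x => (-(2 * (1 + η) / M) * γ) * (1 + Tf x / M) ^ (-2 - η) with hg1
  set g2 : EuclideanSpace ℝ (Fin n) → ℝ :=
    fun x => (4 * (1 + η) * (2 + η) / M ^ 2 * γ) * (1 + Tf x / M) ^ (-3 - η) with hg2
  have g0 : ∀ x, 0 ≤ g x := fun x => mul_nonneg hγ0.le (Real.rpow_nonneg (hq0 x).le _)
  have e1 : ∀ x, g1 x = -(2 * (1 + η) / M) * (g x / (1 + Tf x / M)) := fun x => by
    simp only [hg1, hg, hp1]; ring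
  have e2 : ∀ x, g2 x = 4 * (1 + η) * (2 + η) / M ^ 2 * (g x / (1 + Tf x / M) ^ 2) := fun x => by
    simp only [hg2, hg, hp2]; ring
  have gq : ∀ x, g x * (1 + Tf x / M) ≤ γ := fun x => by
    have : (1 + Tf x / M) ^ (-1 - η) * (1 + Tf x / M) = (1 + Tf x / M) ^ (-η) := by
      rw [← Real.rpow_add_one (hq0 x).ne']; ring_nf
    simp only [hg]
    rw [mul_assoc, this]
    exact mul_le_of_le_one_right hγ0.le
      (Real.rpow_le_one_of_one_le_of_nonpos (hq1 x) (by linarith))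
  have gγ : ∀ x, g x ≤ γ := fun x => by
    have := gq x
    nlinarith [g0 x, hq1 x]
  have Tg : ∀ x, Tf x * g x ≤ γ * M := fun x => by
    have h1 := gq x
    have h2 := hTq x
    have h3 := g0 x
    rw [h2]
    nlinarith
  have Tg2 : ∀ x, Tf x * g x ^ 2 ≤ γ ^ 2 * M := fun x => by
    have h1 := Tg x
    have h2 := gγ x
    have h3 := g0 x
    calc Tf x * g x ^ 2 = (Tf x * g x) * g x := by ring
      _ ≤ (γ * M) * γ := by gcongr
      _ = _ := by ring
  have KB := fun x => K_bound (hq1 x) hM0 hη hη1 (g0 x) (hTq x) (Tg2 x) hηl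
  refine ⟨a, g, g1, g2, γ * M + 4 * γ, Real.exp (-(γ * M / η) * (1 + ε ^ 2 / M) ^ (-η)),
    (hcd _ _).exp, hcd _ _, hcd _ _, ?_, ?_, ?_, fun x => Real.exp_pos _, ?_, g0, ?_, ?_, ?_,
    ?_, ?_, Real.exp_pos _, ?_, ?_⟩
  · intro i x
    have h := pd_q_rpow hM0 (-(γ * M / η)) (-η) i x
    have hd := (hcd (-(γ * M / η)) (-η)).differentiable (by simp) x
    have : pd i a x = a x * pd i (fun y => -(γ * M / η) * (1 + Tf y / M) ^ (-η)) x := by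
      unfold pd
      rw [ha, fderiv_exp hd]; simp
    rw [this, h]
    simp only [hg]
    have : -η - 1 = -1 - η := by ring
    rw [this]
    field_simp
  · intro i x
    rw [hg, pd_q_rpow hM0]
    simp only [hg1]
    have : -1 - η - 1 = -2 - η := by ring
    rw [this]
    field_simp
    ring
  · intro i x
    rw [hg1, pd_q_rpow hM0]
    simp only [hg2]
    have : -2 - η - 1 = -3 - η := by ring
    rw [this]
    field_simp
    ring
  · intro x
    rw [ha]
    apply Real.exp_le_one_iff.2
    have h1 : 0 ≤ (1 + Tf x / M) ^ (-η) := Real.rpow_nonneg (hq0 x).le _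
    have h2 : 0 ≤ γ * M / η := by positivity
    nlinarith
  · intro x
    have := gγ x
    nlinarith
  · intro x
    have := Tg x
    linarith
  · intro x
    have h1 : Tf x * g1 x = -(2 * (1 + η) * (g x * ((1 + Tf x / M) - 1) / (1 + Tf x / M))) := by
      rw [e1]
      have := hq0 x
      field_simp
      ring
    have h2 : g x * ((1 + Tf x / M) - 1) / (1 + Tf x / M) ≤ γ := by
      rw [div_le_iff₀ (hq0 x)]
      have := gγ x
      have := g0 x
      have := hq1 x
      nlinarith
    have h3 : 0 ≤ g x * ((1 + Tf x / M) - 1) / (1 + Tf x / M) :=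
      div_nonneg (mul_nonneg (g0 x) (by linarith [hq1 x])) (hq0 x).le
    rw [h1, abs_neg, abs_of_nonneg (by positivity)]
    have : 0 ≤ γ * M := by positivity
    nlinarith
  · intro x
    rw [e1, e2]
    refine le_trans ?_ (KB x)
    set q := 1 + Tf x / M
    have hs0 : 0 ≤ (q - 1) / q := div_nonneg (by linarith [hq1 x]) (hq0 x).le
    have hs1 : (q - 1) / q ≤ 1 := by rw [div_le_one (hq0 x)]; linarith
    have h1 : -(8 / M) ≤ 2 * M * g x ^ 2 - 8 * g x := by
      rw [← sub_nonneg]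
      have : 2 * M * g x ^ 2 - 8 * g x - -(8 / M) = 2 / M * (M * g x - 2) ^ 2 := by
        field_simp; ring
      rw [this]; positivity
    have h2 : 0 < 8 / M := by positivity
    nlinarith
  · intro x hx1 hx2
    rw [e1, e2]
    refine le_trans ?_ (KB x)
    have hT := hTq x
    have hq2 : 1 + Tf x / M ≤ 2 := by
      have := (div_le_one hM0).2 hx2
      linarith
    have hg4 : γ / 4 ≤ g x := by
      have h1 : (1:ℝ) / 4 ≤ (1 + Tf x / M) ^ (-1 - η) := by
        calc (1:ℝ) / 4 = (2:ℝ) ^ (-2 : ℝ) := by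
              rw [Real.rpow_neg (by norm_num)]; norm_num
          _ ≤ (1 + Tf x / M) ^ (-2 : ℝ) :=
              Real.rpow_le_rpow_of_nonpos (hq0 x) hq2 (by norm_num)
          _ ≤ _ := Real.rpow_le_rpow_of_exponent_le (hq1 x) (by linarith)
      simp only [hg]
      nlinarith
    set q := 1 + Tf x / M
    have hs : ε ^ 2 / (2 * M) ≤ (q - 1) / q := by
      rw [div_le_div_iff₀ (by positivity) (hq0 x)]
      have : q * ε ^ 2 ≤ 2 * Tf x := by nlinarith [sq_nonneg ε]
      nlinarith
    have hgM : M * g x ^ 2 ≤ 2 * M * g x ^ 2 - 8 * g x := by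
      have : 8 ≤ M * g x := by nlinarith
      nlinarith [g0 x]
    have h5 : (γ / 4) ^ 2 ≤ g x ^ 2 := by gcongr
    have h6 : ε ^ 2 * γ ^ 2 / 32 ≤ (q - 1) / q * (2 * M * g x ^ 2 - 8 * g x) := by
      calc ε ^ 2 * γ ^ 2 / 32 = ε ^ 2 / (2 * M) * (M * (γ / 4) ^ 2) := by field_simp; ring
        _ ≤ (q - 1) / q * (2 * M * g x ^ 2 - 8 * g x) := by
          apply mul_le_mul hs _ (by positivity) (le_trans (by positivity) hs)
          exact le_trans (by gcongr) hgM
    linarith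
  · intro x hx
    apply Real.exp_le_exp.2
    have h1 : (1 + ε ^ 2 / M) ^ (-η) ≤ (1 + Tf x / M) ^ (-η) :=
      Real.rpow_le_rpow_of_nonpos (hq0 x) (by gcongr) (by linarith)
    have h2 : 0 ≤ γ * M / η := by positivity
    nlinarith
  · intro x hx
    rw [← Real.exp_add]
    apply Real.exp_le_exp.2
    have h1 : (1 + Tf x / M) ^ (-η) ≤ (1 + 4 * ε ^ 2 / M) ^ (-η) :=
      Real.rpow_le_rpow_of_nonpos (by positivity) (by gcongr) (by linarith)
    have h2 : 0 ≤ γ * M / η := by positivity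
    have hε2 : ε ^ 2 ≤ 1 := pow_le_one₀ hε.le hε1
    have h3 := rpow_diff (p := 1 + ε ^ 2 / M) (q := 1 + 4 * ε ^ 2 / M)
      (by have : 0 ≤ ε ^ 2 / M := by positivity
          linarith)
      (by gcongr; nlinarith) (by
        have : 4 * ε ^ 2 / M ≤ 1 := by rw [div_le_one hM0]; linarith
        linarith) hη hη1
    have h4 : γ * M / η * (η * ((1 + 4 * ε ^ 2 / M) - (1 + ε ^ 2 / M)) / 4)
        = 3 * ε ^ 2 * γ / 4 := by
      field_simp; ring
    have h5 := mul_le_mul_of_nonneg_left h3 h2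
    rw [h4] at h5
    have h6 := mul_le_mul_of_nonneg_left h1 h2
    linarith

lemma Tf_eq {n : ℕ} (x : EuclideanSpace ℝ (Fin n)) : Tf x = ‖x‖ ^ 2 := by
  rw [EuclideanSpace.norm_sq_eq]
  unfold Tf
  exact Finset.sum_congr rfl fun i _ => by rw [Real.norm_eq_abs, sq_abs]; ring

lemma J_bound {t X vi S xi a b c v B0 C1 : ℝ} (ht : 0 ≤ t) (hS : 0 ≤ S) (hX : X ^ 2 ≤ t ^ 2 * S)
    (hvi : vi ^ 2 ≤ S) (hxi : |xi| ≤ t) (ha0 : 0 ≤ a) (ha1 : a ≤ 1) (hb : |b| ≤ B0)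
    (hc : |c| ≤ C1) :
    |a * (X * vi - (1/2) * (S * xi)) + b * (v * vi) + c * ((v * v) * xi)|
      ≤ (1 + t) * ((2 + B0 + C1) * (S + v ^ 2)) := by
  have hB0 : 0 ≤ B0 := (abs_nonneg _).trans hb
  have hC1 : 0 ≤ C1 := (abs_nonneg _).trans hc
  have h1 : |X * vi| ≤ t * S := by
    apply abs_le_of_sq_le_sq _ (by positivity)
    calc (X * vi) ^ 2 = X ^ 2 * vi ^ 2 := by ring
      _ ≤ (t ^ 2 * S) * S := by gcongr
      _ = _ := by ring
  have h2 : |(1/2) * (S * xi)| ≤ 1 / 2 * (S * t) := by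
    rw [abs_mul, abs_mul, abs_of_nonneg hS, abs_of_nonneg (by norm_num : (0:ℝ) ≤ 1/2)]
    gcongr
  have h3 : |v * vi| ≤ S + v ^ 2 := by
    rw [abs_le]; constructor <;> nlinarith [sq_nonneg (v + vi), sq_nonneg (v - vi)]
  have h4 : |a * (X * vi - (1/2) * (S * xi))| ≤ 2 * (t * S) := by
    rw [abs_mul, abs_of_nonneg ha0]
    have h5 : |X * vi - (1/2) * (S * xi)| ≤ 2 * (t * S) := by
      refine (abs_sub _ _).trans ?_
      nlinarith [mul_nonneg ht hS]
    exact (mul_le_of_le_one_left (abs_nonneg _) ha1).trans h5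
  have h6 : |b * (v * vi)| ≤ B0 * (S + v ^ 2) := by
    rw [abs_mul]; gcongr
  have h7 : |c * ((v * v) * xi)| ≤ C1 * (v ^ 2 * t) := by
    rw [abs_mul, abs_mul, abs_mul_self]
    rw [← sq]
    gcongr
  refine (abs_add_three _ _ _).trans ?_
  have := sq_nonneg v
  have h8 : 0 ≤ t * v ^ 2 := by positivity
  have h9 : 0 ≤ t * S := by positivity
  have : 0 ≤ B0 * (t * (S + v ^ 2)) := by positivity
  have : 0 ≤ C1 * (t * S) := by positivity
  have : 0 ≤ C1 * (S + v ^ 2) := by positivity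
  nlinarith

lemma real_case {n : ℕ} {v V : EuclideanSpace ℝ (Fin n) → ℝ} (hv : ContDiff ℝ (⊤ : ℕ∞) v)
    (hV : ContDiff ℝ 1 V) (hv2 : Integrable (fun x => v x ^ 2)) {lam CV C0 M ε : ℝ}
    (hlam : 0 < lam)
    (hCV : ∀ x, |V x| ≤ CV) (hC0 : ∀ x, V x + 1 / 2 * ∑ i, x i * pd i V x ≤ C0) (hC0' : 0 ≤ C0)
    (hM4 : 4 ≤ M) (hMl : 64 / lam ≤ M)
    (hM : ∀ x, M ≤ ‖x‖ ^ 2 → V x + 1 / 2 * ∑ i, x i * pd i V x ≤ lam / 8)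
    (heq : ∀ x, ∑ i, pd i (pd i v) x = (V x - lam) * v x) (hε : 0 < ε) (hε1 : ε ≤ 1) :
    ∀ x, 2 * ε < ‖x‖ → v x = 0 := by
  have hM0 : 0 < M := by linarith
  set W : EuclideanSpace ℝ (Fin n) → ℝ := fun x => V x - lam with hWdef
  have hWs : ContDiff ℝ 1 W := hV.sub contDiff_const
  have hpW : ∀ i x, pd i W x = pd i V x := fun i x => by
    rw [hWdef, pd_sub i (hV.differentiable (by simp) x) (differentiableAt_const _), pd_const]
    ring
  have hWb : ∀ x, |W x| ≤ CV + lam := fun x => by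
    refine (abs_sub _ _).trans ?_
    rw [abs_of_pos hlam]
    linarith [hCV x]
  have hS : Integrable (Sf v) := by
    refine (caccioppoli hv hv2 hWb heq).congr (Filter.Eventually.of_forall fun x => ?_)
    unfold Sf
    exact Finset.sum_congr rfl fun i _ => by ring
  set U : Set (EuclideanSpace ℝ (Fin n)) := {x | 2 * ε < ‖x‖} with hU
  have hUo : IsOpen U := isOpen_lt continuous_const continuous_norm
  have main : ∀ γ : ℝ, 32 ≤ γ → C0 + lam ≤ ε ^ 2 * γ ^ 2 / 32 →
      lam / 2 * Real.exp (3 * ε ^ 2 * γ / 4) * (∫ x in U, v x ^ 2) ≤ C0 * ∫ x, v x ^ 2 := by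
    intro γ hγ hγ2
    obtain ⟨a, g, g1, g2, D, A, ha, hg, hg1, pa, pg, pg1, a0, a1, g0, gD, TgD, Tg1D, K1, K2,
      hA, hA1, hA2⟩ := weights n hM4 hγ hlam hε hε1
    have hD : 0 ≤ D := (g0 0).trans (gD 0)
    set B := lam / 2 * (A * Real.exp (3 * ε ^ 2 * γ / 4)) with hB
    have hB0 : 0 ≤ B := by positivity
    have hi1 : Integrable (fun x => -(C0 * A) * v x ^ 2) := hv2.const_mul _
    have hi2 : Integrable (U.indicator fun x => B * v x ^ 2) :=
      (hv2.const_mul B).indicator hUo.measurableSet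
    have hle := divergence_le (J := Jf v W a g g1)
      (h := fun x => (2 + (n / 2 + 1 + D) + ((CV + lam) / 2 + n / 2 * D + D * D + D / 2))
        * (Sf v x + v x ^ 2))
      (k := fun x => -(C0 * A) * v x ^ 2 + U.indicator (fun x => B * v x ^ 2) x)
      (fun i => Jf_contDiff hv hWs ha hg hg1 i) ((hS.add hv2).const_mul _) (hi1.add hi2)
      (by
        intro i x
        unfold Jf
        have hTx := Tf_eq x
        have hSn : 0 ≤ Sf v x := Finset.sum_nonneg fun i _ => mul_self_nonneg _
        apply J_bound (norm_nonneg x) hSn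
        · rw [← hTx]
          have := Finset.sum_mul_sq_le_sq_mul_sq Finset.univ (fun j => x j) (fun j => pd j v x)
          unfold Xf Tf Sf
          simpa only [sq] using this
        · rw [sq]
          exact Finset.single_le_sum (f := fun j => pd j v x * pd j v x)
            (fun j _ => mul_self_nonneg _) (Finset.mem_univ i)
        · simpa using PiLp.norm_apply_le x i
        · exact (a0 x).le
        · exact a1 x
        · unfold bf
          rw [abs_mul, abs_of_pos (a0 x)]
          refine (mul_le_of_le_one_left (abs_nonneg _) (a1 x)).trans ?_
          have h1 := TgD x
          have h2 := mul_nonneg (Tf_nonneg x) (g0 x)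
          have h3 : (0:ℝ) ≤ n := Nat.cast_nonneg n
          rw [abs_le]; constructor <;> linarith
        · unfold cf
          rw [abs_mul, abs_of_pos (a0 x)]
          refine (mul_le_of_le_one_left (abs_nonneg _) (a1 x)).trans ?_
          have h1 := TgD x
          have h2 := mul_nonneg (Tf_nonneg x) (g0 x)
          have h3 : (0:ℝ) ≤ n := Nat.cast_nonneg n
          have h4 := abs_le.1 (hWb x)
          have h5 := abs_le.1 (Tg1D x)
          have h6 : (n:ℝ) / 2 * g x ≤ n / 2 * D := by gcongr; exact gD x
          have h7 : 0 ≤ (n:ℝ) / 2 * g x := mul_nonneg (by positivity) (g0 x)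
          have h8 : Tf x * (g x * g x) ≤ D * D := by
            rw [← mul_assoc]
            exact mul_le_mul h1 (gD x) (g0 x) hD
          have h9 : 0 ≤ Tf x * (g x * g x) := mul_nonneg (Tf_nonneg x) (mul_self_nonneg _)
          have h10 : 0 ≤ (n:ℝ) / 2 * D := by positivity
          have h11 : 0 ≤ D * D := by positivity
          rw [abs_le]; constructor <;> linarith)
      (by
        intro x
        rw [virial hv hWs ha hg hg1 x (fun i => pa i x) (fun i => pg i x) (fun i => pg1 i x)
          (heq x)]
        have hsq : 0 ≤ 2 * g x * a x * (Xf v x + (Tf x * g x + n / 2) * v x) ^ 2 :=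
          mul_nonneg (mul_nonneg (mul_nonneg zero_le_two (g0 x)) (a0 x).le) (sq_nonneg _)
        refine le_trans ?_ (le_add_of_nonneg_left hsq)
        simp only [hpW]
        set K := 2 * Tf x * g x ^ 2
          + Tf x ^ 2 * g x * g1 x - Tf x * g1 x - 1 / 2 * Tf x ^ 2 * g2 x with hK
        have eK : - W x - 1 / 2 * (∑ i, x i * pd i V x) + 2 * Tf x * g x ^ 2
          + Tf x ^ 2 * g x * g1 x - Tf x * g1 x - 1 / 2 * Tf x ^ 2 * g2 x
          = lam - (V x + 1 / 2 * ∑ i, x i * pd i V x) + K := by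
          rw [hK]; simp only [hWdef]; ring
        rw [eK]
        have hTx := Tf_eq x
        have hnx := norm_nonneg x
        have hv0 := sq_nonneg (v x)
        have hK1 : -(lam / 4) ≤ K := by
          have h1 := K1 x
          have h2 : 8 / M ≤ lam / 8 := by
            rw [div_le_div_iff₀ hM0 (by norm_num)]
            rw [div_le_iff₀ hlam] at hMl
            linarith
          linarith
        have hCAv : 0 ≤ C0 * A * v x ^ 2 := by positivity
        by_cases hx1 : Tf x < ε ^ 2
        · have hxU : x ∉ U := by
            simp only [hU, Set.mem_ofPred_eq, not_lt]
            rw [hTx] at hx1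
            have := lt_of_pow_lt_pow_left₀ 2 hε.le hx1
            linarith
          rw [Set.indicator_of_notMem hxU]
          have h1 : -C0 ≤ lam - (V x + 1 / 2 * ∑ i, x i * pd i V x) + K := by
            linarith [hC0 x]
          have h2 : v x ^ 2 * (-C0) ≤ v x ^ 2 * (lam - (V x + 1 / 2 * ∑ i, x i * pd i V x) + K) :=
            mul_le_mul_of_nonneg_left h1 hv0
          have h3 := mul_le_mul_of_nonneg_left h2 (a0 x).le
          have h4 := mul_le_mul_of_nonneg_right (hA1 x hx1.le) (mul_nonneg hC0' hv0)
          linarith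
        · have hx1' : ε ^ 2 ≤ Tf x := not_lt.1 hx1
          have h1 : lam / 2 ≤ lam - (V x + 1 / 2 * ∑ i, x i * pd i V x) + K := by
            by_cases hx2 : M ≤ Tf x
            · have := hM x (by rw [← hTx]; exact hx2)
              linarith
            · have h2 := K2 x hx1' (not_le.1 hx2).le
              have := hC0 x
              linarith
          have h2 : v x ^ 2 * (lam / 2) ≤
              v x ^ 2 * (lam - (V x + 1 / 2 * ∑ i, x i * pd i V x) + K) :=
            mul_le_mul_of_nonneg_left h1 hv0
          have h3 := mul_le_mul_of_nonneg_left h2 (a0 x).le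
          by_cases hxU : x ∈ U
          · rw [Set.indicator_of_mem hxU]
            have h4 : 4 * ε ^ 2 ≤ Tf x := by
              rw [hTx]
              have : 2 * ε < ‖x‖ := hxU
              nlinarith
            have h5 := mul_le_mul_of_nonneg_right (hA2 x h4)
              (mul_nonneg hv0 (by positivity : 0 ≤ lam / 2))
            have h6 : B * v x ^ 2
                = A * Real.exp (3 * ε ^ 2 * γ / 4) * (v x ^ 2 * (lam / 2)) := by rw [hB]; ring
            rw [h6]
            linarith
          · rw [Set.indicator_of_notMem hxU]
            have : 0 ≤ a x * (v x ^ 2 * (lam / 2)) :=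
              mul_nonneg (a0 x).le (by positivity)
            linarith)
    rw [integral_add hi1 hi2, integral_indicator hUo.measurableSet, integral_const_mul,
      integral_const_mul] at hle
    have : A * (lam / 2 * Real.exp (3 * ε ^ 2 * γ / 4) * (∫ x in U, v x ^ 2))
        ≤ A * (C0 * ∫ x, v x ^ 2) := by
      rw [hB] at hle
      linarith
    exact le_of_mul_le_mul_left this hA
  have hI0 : 0 ≤ ∫ x in U, v x ^ 2 := integral_nonneg fun x => sq_nonneg _
  have hlim : Filter.Tendsto (fun γ : ℝ => lam / 2 * Real.exp (3 * ε ^ 2 * γ / 4))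
      Filter.atTop Filter.atTop := by
    apply Filter.Tendsto.const_mul_atTop (by positivity)
    apply Real.tendsto_exp_atTop.comp
    apply Filter.Tendsto.atTop_div_const (by norm_num)
    exact Filter.Tendsto.const_mul_atTop (by positivity) Filter.tendsto_id
  have hlim2 : Filter.Tendsto (fun γ : ℝ => ε ^ 2 * γ ^ 2 / 32) Filter.atTop Filter.atTop := by
    apply Filter.Tendsto.atTop_div_const (by norm_num)
    exact Filter.Tendsto.const_mul_atTop (by positivity) (Filter.tendsto_pow_atTop (by norm_num))
  have hIz : ∫ x in U, v x ^ 2 = 0 := by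
    by_contra hne
    have hpos : 0 < ∫ x in U, v x ^ 2 := lt_of_le_of_ne hI0 (Ne.symm hne)
    have hl3 := hlim.atTop_mul_const hpos
    obtain ⟨γ, h1, h2, h3⟩ := ((Filter.eventually_ge_atTop (32:ℝ)).and
      ((hlim2.eventually_ge_atTop (C0 + lam)).and
        (hl3.eventually_gt_atTop (C0 * ∫ x, v x ^ 2)))).exists
    exact absurd (main γ h1 h2) (not_le.2 h3)
  have hae : (fun x => v x ^ 2) =ᵐ[volume.restrict U] 0 :=
    (integral_eq_zero_iff_of_nonneg (fun x => sq_nonneg _) hv2.integrableOn).1 hIz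
  have hEq := Measure.eqOn_open_of_ae_eq hae hUo (hv.continuous.pow 2).continuousOn
    continuousOn_const
  intro x hx
  have := hEq (show x ∈ U from hx)
  simpa using this

lemma sum_x_pd {n : ℕ} (V : EuclideanSpace ℝ (Fin n) → ℝ) (x : EuclideanSpace ℝ (Fin n)) :
    ∑ i, x i * pd i V x = fderiv ℝ V x x := by
  have h : x = ∑ i, x i • (EuclideanSpace.single i (1:ℝ)) := by
    have := (EuclideanSpace.basisFun (Fin n) ℝ).sum_repr x
    simpa using this.symm
  conv_rhs => rw [h]
  rw [map_sum]
  simp only [map_smul, smul_eq_mul]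
  rw [← h]
  rfl

lemma re_lap {n : ℕ} (L : ℂ →L[ℝ] ℝ) {ψ : EuclideanSpace ℝ (Fin n) → ℂ}
    (hψ : ContDiff ℝ (⊤ : ℕ∞) ψ) (x) :
    ∑ i, pd i (pd i (fun y => L (ψ y))) x = L (lap ψ x) := by
  have hc : ∀ {f : EuclideanSpace ℝ (Fin n) → ℂ} (hf : Differentiable ℝ f) (i : Fin n) (y),
      pd i (fun y => L (f y)) y = L (fderiv ℝ f y (EuclideanSpace.single i 1)) := by
    intro f hf i y
    unfold pd
    have h := L.hasFDerivAt.comp y (hf y).hasFDerivAt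
    have h2 : fderiv ℝ (fun y => L (f y)) y = L.comp (fderiv ℝ f y) := h.fderiv
    rw [h2]; rfl
  unfold lap
  rw [map_sum]
  refine Finset.sum_congr rfl fun i _ => ?_
  have e : pd i (fun y => L (ψ y))
      = fun y => L (fderiv ℝ ψ y (EuclideanSpace.single i 1)) := by
    funext y
    exact hc (hψ.differentiable (by simp)) i y
  rw [e]
  apply hc
  exact ((hψ.fderiv_right (m := (⊤ : ℕ∞)) (by simp)).clm_apply contDiff_const).differentiable
    (by simp)

/-- Euclidean instance of Corollary 5.4: absence of positive `L²` eigenvalues for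
`-Δ + V` with a smooth potential `V` of symbolic decay order `-δ`. -/
theorem stmt_9 (n : ℕ) (hn : 1 ≤ n) (δ : ℝ) (hδ : 0 < δ)
    (V : EuclideanSpace ℝ (Fin n) → ℝ) (hV : ContDiff ℝ (⊤ : ℕ∞) V)
    (hdecay : ∀ k : ℕ, ∃ C : ℝ, ∀ x,
      ‖iteratedFDeriv ℝ k V x‖ ≤ C * (1 + ‖x‖) ^ (-(δ + (k:ℝ))))
    (lam : ℝ) (hlam : 0 < lam)
    (ψ : EuclideanSpace ℝ (Fin n) → ℂ) (hψ : ContDiff ℝ (⊤ : ℕ∞) ψ)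
    (hL2 : Integrable (fun x => ‖ψ x‖^2))
    (heq : ∀ x, -lap ψ x + (V x : ℂ) * ψ x = (lam : ℂ) * ψ x) :
    ∀ x, ψ x = 0 := by
  obtain ⟨C0, h0⟩ := hdecay 0
  obtain ⟨C1, h1⟩ := hdecay 1
  have hx0 : ∀ x : EuclideanSpace ℝ (Fin n), 0 < 1 + ‖x‖ := fun x => by positivity
  have hV0 : ∀ x, |V x| ≤ |C0| * (1 + ‖x‖) ^ (-δ) := fun x => by
    have h := h0 x
    rw [norm_iteratedFDeriv_zero] at h
    simp only [Nat.cast_zero, add_zero, Real.norm_eq_abs] at h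
    refine h.trans (mul_le_mul_of_nonneg_right (le_abs_self _) (Real.rpow_nonneg (hx0 x).le _))
  have hV1 : ∀ x, |∑ i, x i * pd i V x| ≤ |C1| * (1 + ‖x‖) ^ (-δ) := fun x => by
    have h := h1 x
    rw [norm_iteratedFDeriv_one] at h
    rw [sum_x_pd]
    have e : (1 + ‖x‖) ^ (-δ) = (1 + ‖x‖) ^ (-(δ + ((1:ℕ):ℝ))) * (1 + ‖x‖) := by
      rw [← Real.rpow_add_one (hx0 x).ne']; congr 1; push_cast; ring
    rw [e]
    have h2 : (0:ℝ) ≤ (1 + ‖x‖) ^ (-(δ + ((1:ℕ):ℝ))) := Real.rpow_nonneg (hx0 x).le _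
    calc |fderiv ℝ V x x| ≤ ‖fderiv ℝ V x‖ * ‖x‖ := (fderiv ℝ V x).le_opNorm x
      _ ≤ (|C1| * (1 + ‖x‖) ^ (-(δ + ((1:ℕ):ℝ)))) * (1 + ‖x‖) := by
        apply mul_le_mul _ (by linarith) (norm_nonneg x) (by positivity)
        exact h.trans (mul_le_mul_of_nonneg_right (le_abs_self _) h2)
      _ = _ := by ring
  have hVV : ∀ x, V x + 1 / 2 * ∑ i, x i * pd i V x ≤ (|C0| + |C1|) * (1 + ‖x‖) ^ (-δ) := by
    intro x
    have a1 := (abs_le.1 (hV0 x)).2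
    have a2 := (abs_le.1 (hV1 x)).2
    have a3 : 0 ≤ |C1| * (1 + ‖x‖) ^ (-δ) := (abs_nonneg _).trans (hV1 x)
    linarith
  have hle1 : ∀ x : EuclideanSpace ℝ (Fin n), (1 + ‖x‖) ^ (-δ) ≤ 1 := fun x =>
    Real.rpow_le_one_of_one_le_of_nonpos (by linarith [norm_nonneg x]) (by linarith)
  obtain ⟨R, hR⟩ : ∃ R : ℝ, ∀ r, R ≤ r → (|C0| + |C1|) * (1 + r) ^ (-δ) ≤ lam / 8 := by
    have ht : Filter.Tendsto (fun r : ℝ => (|C0| + |C1|) * (1 + r) ^ (-δ)) Filter.atTop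
        (nhds ((|C0| + |C1|) * 0)) :=
      ((tendsto_rpow_neg_atTop hδ).comp (Filter.tendsto_atTop_add_const_left _ 1
        Filter.tendsto_id)).const_mul _
    rw [mul_zero] at ht
    exact Filter.eventually_atTop.1 (ht.eventually_le_const (by positivity : 0 < lam / 8))
  have hreal : ∀ (L : ℂ →L[ℝ] ℝ) (hL : ∀ z, |L z| ≤ ‖z‖) (x : EuclideanSpace ℝ (Fin n)),
      x ≠ 0 → L (ψ x) = 0 := by
    intro L hL x hx
    have hv : ContDiff ℝ (⊤ : ℕ∞) (fun y => L (ψ y)) := L.contDiff.comp hψ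
    have hnx : 0 < ‖x‖ := norm_pos_iff.2 hx
    refine real_case (v := fun y => L (ψ y)) (V := V) (lam := lam) (CV := |C0|)
      (C0 := |C0| + |C1|) (M := max (max 4 (64 / lam)) (R ^ 2)) (ε := min 1 (‖x‖ / 3))
      hv (hV.of_le (by exact_mod_cast le_top)) ?_ hlam ?_ ?_ (by positivity)
      ((le_max_left _ _).trans (le_max_left _ _)) ((le_max_right _ _).trans (le_max_left _ _))
      ?_ ?_ (by positivity) (min_le_left _ _) x ?_
    · refine hL2.mono' (hv.continuous.pow 2).aestronglyMeasurable
        (Filter.Eventually.of_forall fun y => ?_)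
      simp only [norm_pow, Real.norm_eq_abs]
      gcongr
      exact hL _
    · intro y
      exact (hV0 y).trans (mul_le_of_le_one_right (abs_nonneg _) (hle1 y))
    · intro y
      exact (hVV y).trans (mul_le_of_le_one_right (by positivity) (hle1 y))
    · intro y hy
      refine (hVV y).trans (hR _ ?_)
      exact (abs_le_of_sq_le_sq' ((le_max_right _ _).trans hy) (norm_nonneg y)).2
    · intro y
      rw [re_lap L hψ]
      have e : lap ψ y = (V y - lam) • ψ y := by
        have := heq y
        rw [Complex.real_smul]
        push_cast
        linear_combination -this
      rw [e, map_smul, smul_eq_mul]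
    · have : min 1 (‖x‖ / 3) ≤ ‖x‖ / 3 := min_le_right _ _
      linarith
  have hne : ∀ x, x ≠ 0 → ψ x = 0 := by
    intro x hx
    apply Complex.ext
    · exact hreal Complex.reCLM (fun z => Complex.abs_re_le_norm z) x hx
    · exact hreal Complex.imCLM (fun z => Complex.abs_im_le_norm z) x hx
  haveI : Nonempty (Fin n) := ⟨⟨0, hn⟩⟩
  have hd : Dense ({0}ᶜ : Set (EuclideanSpace ℝ (Fin n))) := dense_compl_singleton 0
  have hfun : ψ = fun _ => 0 :=
    Continuous.ext_on hd hψ.continuous continuous_const fun x hx => hne x hx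
  intro x
  rw [hfun]
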